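/- arXiv:1305.3318 — 2 statements merged into one kernel-verified Lean document; each statement's English description precedes it below -/
import Mathlib

section
/- Let ℓ ≥ 1, let Q = (Fin ℓ →₀ ℕ) be the free commutative monoid on ℓ generators, and let L be a Lie algebra over ℂ equipped with a family of ℂ-subspaces (𝒜_q)_{q∈Q} forming an internal direct sum decomposition L = ⊕_{q∈Q} 𝒜_q with [𝒜_p, 𝒜_q] ⊆ 𝒜_{p+q} for all p, q ∈ Q. Suppose e : Fin ℓ → L satisfies e_i ∈ 𝒜_{δ_i} for each i (δ_i ∈ Q the indicator function of i) and that the family (e_i) generates L as a Lie algebra. Then for every α ∈ Q, the component 𝒜_α is finite-dimensional of dimension at most ℓ^{ht(α)}, where ht(α) = ∑_{i} α(i) is the height of α. -/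
/-- Right-normed bracket words in the generators. -/
def lieWord {ℓ : ℕ} {L : Type*} [LieRing L] (e : Fin ℓ → L) : List (Fin ℓ) → L
  | [] => 0
  | [i] => e i
  | i :: j :: w => ⁅e i, lieWord e (j :: w)⁆

/-- The degree of a word. -/
noncomputable def lieWordDeg {ℓ : ℕ} (w : List (Fin ℓ)) : Fin ℓ →₀ ℕ :=
  (w.map fun i => Finsupp.single i 1).sum

theorem lieWordDeg_sum {ℓ : ℕ} (w : List (Fin ℓ)) :
    ((lieWordDeg w).sum fun _ n => n) = w.length := by
  induction w with
  | nil => simp [lieWordDeg]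
  | cons i w ih =>
    have h : lieWordDeg (i :: w) = Finsupp.single i 1 + lieWordDeg w := by simp [lieWordDeg]
    rw [h, Finsupp.sum_add_index' (by simp) (by simp), ih]
    simp [add_comm]

theorem lieWord_mem {ℓ : ℕ} {L : Type*} [LieRing L] [LieAlgebra ℂ L]
    (𝒜 : (Fin ℓ →₀ ℕ) → Submodule ℂ L)
    (hbracket : ∀ p q : Fin ℓ →₀ ℕ, ∀ x ∈ 𝒜 p, ∀ y ∈ 𝒜 q, ⁅x, y⁆ ∈ 𝒜 (p + q))
    (e : Fin ℓ → L) (he : ∀ i : Fin ℓ, e i ∈ 𝒜 (Finsupp.single i 1)) :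
    ∀ w, lieWord e w ∈ 𝒜 (lieWordDeg w)
  | [] => by simp [lieWord]
  | [i] => by simpa [lieWord, lieWordDeg] using he i
  | i :: j :: w => by
    have h : lieWordDeg (i :: j :: w) = Finsupp.single i 1 + lieWordDeg (j :: w) := by
      simp [lieWordDeg]
    rw [h, lieWord]
    exact hbracket _ _ _ (he i) _ (lieWord_mem 𝒜 hbracket e he (j :: w))

theorem lieWord_span {ℓ : ℕ} {L : Type*} [LieRing L] [LieAlgebra ℂ L] (e : Fin ℓ → L)
    (hgen : LieSubalgebra.lieSpan ℂ L (Set.range e) = ⊤) (x : L) :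
    x ∈ Submodule.span ℂ (Set.range (lieWord e)) := by
  set W := Submodule.span ℂ (Set.range (lieWord e)) with hW
  have hx : x ∈ LieSubalgebra.lieSpan ℂ L (Set.range e) := by rw [hgen]; trivial
  suffices h : x ∈ W ∧ ∀ y ∈ W, ⁅x, y⁆ ∈ W from h.1
  induction hx using LieSubalgebra.lieSpan_induction with
  | mem u hu =>
    obtain ⟨i, rfl⟩ := hu
    refine ⟨Submodule.subset_span ⟨[i], rfl⟩, fun y hy => ?_⟩
    induction hy using Submodule.span_induction with
    | mem v hv =>
      obtain ⟨w, rfl⟩ := hv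
      cases w with
      | nil => simp [lieWord]
      | cons j w => exact Submodule.subset_span ⟨i :: j :: w, rfl⟩
    | zero => simp
    | add a b _ _ ha hb => rw [lie_add]; exact add_mem ha hb
    | smul t a _ ha => rw [lie_smul]; exact W.smul_mem t ha
  | zero => simp
  | add a b _ _ ha hb =>
    exact ⟨add_mem ha.1 hb.1, fun y hy => by
      rw [add_lie]; exact add_mem (ha.2 y hy) (hb.2 y hy)⟩
  | smul t a _ ha =>
    exact ⟨W.smul_mem t ha.1, fun y hy => by rw [smul_lie]; exact W.smul_mem t (ha.2 y hy)⟩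
  | lie a b _ _ ha hb =>
    exact ⟨ha.2 b hb.1, fun y hy => by
      rw [lie_lie]; exact sub_mem (ha.2 _ (hb.2 y hy)) (hb.2 _ (ha.2 y hy))⟩

/-- Let `Q = (Fin ℓ →₀ ℕ)` and let `L` be a Lie algebra over `ℂ` with a `Q`-grading
`(𝒜 q)_{q ∈ Q}` (an internal direct sum with `⁅𝒜 p, 𝒜 q⁆ ⊆ 𝒜 (p+q)`).  If `e : Fin ℓ → L`
satisfies `e i ∈ 𝒜 (δ i)` and generates `L` as a Lie algebra, then for every `α ∈ Q` the
component `𝒜 α` is finite dimensional of dimension at most `ℓ ^ ht(α)`, where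
`ht(α) = ∑ i, α i`. -/
theorem graded_component_finrank_le
    (ℓ : ℕ) (hℓ : 1 ≤ ℓ) {L : Type*} [LieRing L] [LieAlgebra ℂ L]
    (𝒜 : (Fin ℓ →₀ ℕ) → Submodule ℂ L)
    (hinternal : DirectSum.IsInternal 𝒜)
    (hbracket : ∀ p q : Fin ℓ →₀ ℕ, ∀ x ∈ 𝒜 p, ∀ y ∈ 𝒜 q, ⁅x, y⁆ ∈ 𝒜 (p + q))
    (e : Fin ℓ → L) (he : ∀ i : Fin ℓ, e i ∈ 𝒜 (Finsupp.single i 1))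
    (hgen : LieSubalgebra.lieSpan ℂ L (Set.range e) = ⊤)
    (α : Fin ℓ →₀ ℕ) :
    FiniteDimensional ℂ (𝒜 α) ∧
      Module.finrank ℂ (𝒜 α) ≤ ℓ ^ (α.sum fun _ n => n) := by
  classical
  letI : DirectSum.Decomposition 𝒜 := hinternal.chooseDecomposition
  set n := α.sum fun _ n => n with hn
  set f : (Fin n → Fin ℓ) → L := fun v => lieWord e (List.ofFn v) with hf
  have key : ∀ x : L, (DirectSum.decompose 𝒜 x α : L) ∈ Submodule.span ℂ (Set.range f) := by
    intro x
    have hx := lieWord_span e hgen x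
    induction hx using Submodule.span_induction with
    | mem v hv =>
      obtain ⟨w, rfl⟩ := hv
      have hw := lieWord_mem 𝒜 hbracket e he w
      by_cases h : lieWordDeg w = α
      · rw [h] at hw
        rw [DirectSum.decompose_of_mem_same 𝒜 hw]
        have hl : w.length = n := by rw [hn, ← h, lieWordDeg_sum]
        clear_value n
        subst hl
        exact Submodule.subset_span ⟨w.get, by simp [hf]⟩
      · rw [DirectSum.decompose_of_mem_ne 𝒜 hw h]
        exact zero_mem _
    | zero => simp
    | add a b _ _ ha hb => simpa [DirectSum.decompose_add] using add_mem ha hb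
    | smul t a _ ha =>
      rw [DirectSum.decompose_smul]
      exact Submodule.smul_mem _ t ha
  have hle : 𝒜 α ≤ Submodule.span ℂ (Set.range f) := by
    intro x hx
    have := key x
    rwa [DirectSum.decompose_of_mem_same 𝒜 hx] at this
  haveI : FiniteDimensional ℂ (Submodule.span ℂ (Set.range f)) :=
    FiniteDimensional.span_of_finite ℂ (Set.finite_range f)
  refine ⟨Submodule.finiteDimensional_of_le hle, (Submodule.finrank_mono hle).trans ?_⟩
  have := finrank_range_le_card (R := ℂ) f
  simpa [Set.finrank] using this
end

section
/- Let g = g(A) be the Serre-presented Lie algebra over ℂ of the generalized Cartan matrix A = [[2,−3],[−3,2]]. Then the root space of α = 4α₁ + 5α₂, namely the subspace {x ∈ g : [h₁,x] = −7·x and [h₂,x] = −2·x}, has dimension 9 over ℂ; that is, mult(4α₁+5α₂) = 9. (Here −7 = 2·4 − 3·5 and −2 = −3·4 + 2·5 are the values ∑_j A_{ij} c_j for c = (4,5).) -/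
/-! Serre presentation of the Kac–Moody Lie algebra `g(A)` of a generalized Cartan
matrix `A`. -/

/-- Generators `e i`, `f i`, `h i` of the Serre presentation. -/
inductive ChevalleyGen (ℓ : ℕ) : Type
  | e : Fin ℓ → ChevalleyGen ℓ
  | f : Fin ℓ → ChevalleyGen ℓ
  | h : Fin ℓ → ChevalleyGen ℓ

namespace KacMoody

variable {ℓ : ℕ}

/-- The free Lie algebra over `ℂ` on the generators. -/
abbrev FreeLie (ℓ : ℕ) : Type := FreeLieAlgebra ℂ (ChevalleyGen ℓ)

noncomputable def E (i : Fin ℓ) : FreeLie ℓ := FreeLieAlgebra.of ℂ (ChevalleyGen.e i)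
noncomputable def F (i : Fin ℓ) : FreeLie ℓ := FreeLieAlgebra.of ℂ (ChevalleyGen.f i)
noncomputable def H (i : Fin ℓ) : FreeLie ℓ := FreeLieAlgebra.of ℂ (ChevalleyGen.h i)

open LieAlgebra in
/-- The defining relations of the Serre presentation: `⁅h i, h j⁆ = 0`,
`⁅e i, f j⁆ = δ_{ij} h i`, `⁅h i, e j⁆ = A i j • e j`, `⁅h i, f j⁆ = −A i j • f j`, and the
Serre relations `(ad (e i))^(1 − A i j) (e j) = 0`, `(ad (f i))^(1 − A i j) (f j) = 0` for
`i ≠ j`. -/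
noncomputable def serreRelations (A : Matrix (Fin ℓ) (Fin ℓ) ℤ) : Set (FreeLie ℓ) :=
  {x : FreeLie ℓ | ∃ i j : Fin ℓ, x = ⁅H i, H j⁆} ∪
  {x : FreeLie ℓ | ∃ i j : Fin ℓ, x = ⁅E i, F j⁆ - if i = j then H i else 0} ∪
  {x : FreeLie ℓ | ∃ i j : Fin ℓ, x = ⁅H i, E j⁆ - (A i j : ℂ) • E j} ∪
  {x : FreeLie ℓ | ∃ i j : Fin ℓ, x = ⁅H i, F j⁆ + (A i j : ℂ) • F j} ∪
  {x : FreeLie ℓ | ∃ i j : Fin ℓ, i ≠ j ∧ x = ((ad ℂ (FreeLie ℓ) (E i)) ^ (1 - A i j).toNat) (E j)} ∪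
  {x : FreeLie ℓ | ∃ i j : Fin ℓ, i ≠ j ∧ x = ((ad ℂ (FreeLie ℓ) (F i)) ^ (1 - A i j).toNat) (F j)}

/-- The Lie ideal of the free Lie algebra generated by the Serre relations. -/
noncomputable def serreIdeal (A : Matrix (Fin ℓ) (Fin ℓ) ℤ) : LieIdeal ℂ (FreeLie ℓ) :=
  LieSubmodule.lieSpan ℂ (FreeLie ℓ) (serreRelations A)

/-- The Serre-presented Lie algebra `g(A)` of a generalized Cartan matrix `A`: the quotient
of the free Lie algebra on the generators `e i`, `f i`, `h i` by the ideal generated by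
the defining relations. -/
abbrev gA (A : Matrix (Fin ℓ) (Fin ℓ) ℤ) : Type := FreeLie ℓ ⧸ serreIdeal A

/-- The image of `h i` in `g(A)`. -/
noncomputable def Hbar (A : Matrix (Fin ℓ) (Fin ℓ) ℤ) (i : Fin ℓ) : gA A :=
  LieSubmodule.Quotient.mk' (serreIdeal A) (H i)

open LieAlgebra in
/-- The root space `g_α` for `α = ∑ c i • α i`: all `x` with
`⁅h i, x⁆ = (∑ j, A i j * c j) • x` for every `i`. -/
noncomputable def rootSpace (A : Matrix (Fin ℓ) (Fin ℓ) ℤ) (c : Fin ℓ → ℤ) :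
    Submodule ℂ (gA A) :=
  ⨅ i : Fin ℓ, Module.End.eigenspace (ad ℂ (gA A) (Hbar A i)) ((∑ j, A i j * c j : ℤ) : ℂ)

/-- The multiplicity of the root `α = ∑ c i • α i`: the dimension of `g_α`. -/
noncomputable def mult (A : Matrix (Fin ℓ) (Fin ℓ) ℤ) (c : Fin ℓ → ℤ) : ℕ :=
  Module.finrank ℂ (rootSpace A c)

end KacMoody

set_option linter.unusedSimpArgs false
set_option linter.unusedVariables false
set_option linter.unusedTactic false
set_option linter.unreachableTactic false

/-- Right-normed brackets. -/
def rn {L : Type*} [LieRing L] (e : Fin 2 → L) : List (Fin 2) → L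
  | [] => 0
  | [i] => e i
  | i :: j :: w => ⁅e i, rn e (j :: w)⁆

theorem rn_cons {L : Type*} [LieRing L] (e : Fin 2 → L) (i : Fin 2) (w : List (Fin 2)) (hw : w ≠ []) :
    rn e (i :: w) = ⁅e i, rn e w⁆ := by
  cases w with
  | nil => exact absurd rfl hw
  | cons j w => rfl

/-- All right-normed brackets of content `(a, b)` lie in the span of `S`. -/
def Sp {L : Type*} [LieRing L] [LieAlgebra ℂ L] (e : Fin 2 → L) (a b : ℕ) (S : Set L) : Prop :=
  ∀ w : List (Fin 2), w.count 0 = a → w.count 1 = b → rn e w ∈ Submodule.span ℂ S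

theorem lie_mem_span {L : Type*} [LieRing L] [LieAlgebra ℂ L] (x : L) (S : Set L) (T : Submodule ℂ L)
    (h : ∀ s ∈ S, ⁅x, s⁆ ∈ T) (z : L) (hz : z ∈ Submodule.span ℂ S) : ⁅x, z⁆ ∈ T := by
  induction hz using Submodule.span_induction with
  | mem s hs => exact h s hs
  | zero => rw [lie_zero]; exact T.zero_mem
  | add a b _ _ ha hb => rw [lie_add]; exact T.add_mem ha hb
  | smul c a _ ha => rw [lie_smul]; exact T.smul_mem c ha

theorem Sp.step {L : Type*} [LieRing L] [LieAlgebra ℂ L] {e : Fin 2 → L} {a b : ℕ} {S0 S1 S : Set L}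
    (h0 : Sp e a (b + 1) S0) (h1 : Sp e (a + 1) b S1)
    (k0 : ∀ s ∈ S0, ⁅e 0, s⁆ ∈ Submodule.span ℂ S) (k1 : ∀ s ∈ S1, ⁅e 1, s⁆ ∈ Submodule.span ℂ S) :
    Sp e (a + 1) (b + 1) S := by
  intro w ha hb
  cases w with
  | nil => simp at ha
  | cons i w =>
    have hw : w ≠ [] := by
      rintro rfl
      fin_cases i <;> simp at ha hb
    rw [rn_cons e i w hw]
    fin_cases i
    · simp at ha hb
      exact lie_mem_span _ _ _ k0 _ (h0 w ha hb)
    · simp at ha hb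
      exact lie_mem_span _ _ _ k1 _ (h1 w ha hb)

theorem Sp.col {L : Type*} [LieRing L] [LieAlgebra ℂ L] (e : Fin 2 → L) (b : ℕ) :
    Sp e 0 (b + 2) ∅ := by
  intro w ha hb
  have hw : w = List.replicate (b + 2) 1 := by
    rw [List.eq_replicate_iff]
    have h1 : ∀ i ∈ w, i = 1 := by
      intro i hi
      by_contra hne
      have : i = 0 := by omega
      subst this
      exact absurd hi (List.count_eq_zero.mp ha)
    refine ⟨?_, h1⟩
    rw [← hb, eq_comm, List.count_eq_length]
    intro i hi
    exact (h1 i hi).symm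
  subst hw
  clear ha hb
  have : rn e (List.replicate (b + 2) 1) = 0 := by
    induction b with
    | zero => simp [List.replicate, rn]
    | succ b ih =>
      rw [List.replicate_succ, rn_cons _ _ _ (by simp [List.replicate_succ]), ih, lie_zero]
  rw [this]
  exact Submodule.zero_mem _

theorem Sp.row {L : Type*} [LieRing L] [LieAlgebra ℂ L] (e : Fin 2 → L) (b : ℕ) :
    Sp e (b + 2) 0 ∅ := by
  intro w hb ha
  have hw : w = List.replicate (b + 2) 0 := by
    rw [List.eq_replicate_iff]
    have h1 : ∀ i ∈ w, i = 0 := by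
      intro i hi
      by_contra hne
      have : i = 1 := by omega
      subst this
      exact absurd hi (List.count_eq_zero.mp ha)
    refine ⟨?_, h1⟩
    rw [← hb, eq_comm, List.count_eq_length]
    intro i hi
    exact (h1 i hi).symm
  subst hw
  clear ha hb
  have : rn e (List.replicate (b + 2) 0) = 0 := by
    induction b with
    | zero => simp [List.replicate, rn]
    | succ b ih =>
      rw [List.replicate_succ, rn_cons _ _ _ (by simp [List.replicate_succ]), ih, lie_zero]
  rw [this]
  exact Submodule.zero_mem _

theorem Sp.one0 {L : Type*} [LieRing L] [LieAlgebra ℂ L] (e : Fin 2 → L) : Sp e 1 0 {e 0} := by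
  intro w ha hb
  have hl : w.length = 1 := by
    have := List.length_eq_countP_add_countP (fun i : Fin 2 => i == 0) (l := w)
    have h2 : List.countP (fun i : Fin 2 => !(i == 0)) w = w.count 1 := by
      rw [List.count]
      apply List.countP_congr
      intro i _
      fin_cases i <;> simp
    rw [List.count] at ha
    simp only [Bool.not_eq_true, Bool.decide_eq_false] at this
    omega
  obtain ⟨i, rfl⟩ := List.length_eq_one_iff.mp hl
  fin_cases i
  · exact Submodule.subset_span rfl
  · simp at ha

theorem Sp.one1 {L : Type*} [LieRing L] [LieAlgebra ℂ L] (e : Fin 2 → L) : Sp e 0 1 {e 1} := by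
  intro w ha hb
  have hl : w.length = 1 := by
    have := List.length_eq_countP_add_countP (fun i : Fin 2 => i == 0) (l := w)
    have h2 : List.countP (fun i : Fin 2 => !(i == 0)) w = w.count 1 := by
      rw [List.count]
      apply List.countP_congr
      intro i _
      fin_cases i <;> simp
    rw [List.count] at ha
    simp only [Bool.not_eq_true, Bool.decide_eq_false] at this
    omega
  obtain ⟨i, rfl⟩ := List.length_eq_one_iff.mp hl
  fin_cases i
  · simp at hb
  · exact Submodule.subset_span rfl

theorem spt {L : Type*} [LieRing L] [LieAlgebra ℂ L] {S : Set L} {z : L}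
    (h : z ∈ Submodule.span ℂ S := by
  repeat' first
    | exact Submodule.zero_mem _
    | apply Submodule.add_mem
    | apply Submodule.smul_mem
    | apply Submodule.neg_mem
    | (apply Submodule.subset_span; simp only [Set.mem_insert_iff, Set.mem_singleton_iff, true_or, or_true])) :
    z ∈ Submodule.span ℂ S := h

theorem upper {L : Type*} [LieRing L] [LieAlgebra ℂ L] (e : Fin 2 → L)
    (hx : ⁅e 0, ⁅e 0, ⁅e 0, ⁅e 0, e 1⁆⁆⁆⁆ = 0) (hy : ⁅e 1, ⁅e 1, ⁅e 1, ⁅e 0, e 1⁆⁆⁆⁆ = 0) :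
    Sp e 4 5 (rn e '' {[0, 0, 1, 1, 0, 1, 1, 0, 1], [0, 1, 0, 1, 0, 1, 1, 0, 1], [0, 1, 1, 0, 0, 1, 1, 0, 1], [0, 1, 1, 0, 1, 0, 1, 0, 1], [1, 0, 0, 1, 0, 1, 1, 0, 1], [1, 0, 1, 0, 0, 1, 1, 0, 1], [1, 0, 1, 0, 1, 0, 1, 0, 1], [1, 0, 1, 1, 0, 0, 1, 0, 1], [1, 1, 0, 0, 0, 1, 1, 0, 1]}) := by
  have c := Sp.col e
  have r := Sp.row e
  have s1_0 := Sp.one0 e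
  have s0_1 := Sp.one1 e
  have s0_2 := c 0
  have s0_3 := c 1
  have s0_4 := c 2
  have s0_5 := c 3
  have s2_0 := r 0
  have s3_0 := r 1
  have s4_0 := r 2
  have key : ∃ x y : L, x = e 0 ∧ y = e 1 := ⟨_, _, rfl, rfl⟩
  obtain ⟨x, y, hx0, hy0⟩ := key
  rw [← hx0, ← hy0] at hx hy
  rw [← hx0] at s1_0
  rw [← hy0] at s0_1
  have r0 : ⁅y, x⁆ = -⁅x, y⁆ := (lie_skew y x).symm
  have h1_0 : ⁅x, ⁅y, ⁅x, y⁆⁆⁆ - ⁅y, ⁅x, ⁅x, y⁆⁆⁆ = 0 := by rw [← lie_lie, lie_self]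
  have r1 : ⁅y, ⁅x, ⁅x, y⁆⁆⁆ = (1 : ℂ) • ⁅x, ⁅y, ⁅x, y⁆⁆⁆ := by
    linear_combination (norm := module) (-1 : ℂ) • h1_0
  have h2_0 : ⁅⁅x, y⁆, ⁅y, ⁅y, ⁅x, y⁆⁆⁆⁆ = -⁅⁅y, ⁅y, ⁅x, y⁆⁆⁆, ⁅x, y⁆⁆ := (lie_skew _ _).symm
  simp only [lie_lie, lie_add, lie_sub, lie_neg, lie_smul, lie_zero, lie_self, r0, hx, hy, r1] at h2_0
  have r2 : ⁅y, ⁅y, ⁅x, ⁅y, ⁅x, y⁆⁆⁆⁆⁆ = (2 : ℂ) • ⁅y, ⁅x, ⁅y, ⁅y, ⁅x, y⁆⁆⁆⁆⁆ := by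
    linear_combination (norm := module) (1 : ℂ) • h2_0
  have h3_0 : ⁅⁅x, y⁆, ⁅x, ⁅y, ⁅x, y⁆⁆⁆⁆ = -⁅⁅x, ⁅y, ⁅x, y⁆⁆⁆, ⁅x, y⁆⁆ := (lie_skew _ _).symm
  simp only [lie_lie, lie_add, lie_sub, lie_neg, lie_smul, lie_zero, lie_self, r0, hx, hy, r1, r2] at h3_0
  have r3 : ⁅y, ⁅y, ⁅x, ⁅x, ⁅x, y⁆⁆⁆⁆⁆ = (-3 : ℂ) • ⁅x, ⁅y, ⁅x, ⁅y, ⁅x, y⁆⁆⁆⁆⁆ + (3 : ℂ) • ⁅y, ⁅x, ⁅x, ⁅y, ⁅x, y⁆⁆⁆⁆⁆ + (1 : ℂ) • ⁅x, ⁅x, ⁅y, ⁅y, ⁅x, y⁆⁆⁆⁆⁆ := by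
    linear_combination (norm := module) (1 : ℂ) • h3_0
  have h4_0 : ⁅⁅x, y⁆, ⁅x, ⁅x, ⁅x, y⁆⁆⁆⁆ = -⁅⁅x, ⁅x, ⁅x, y⁆⁆⁆, ⁅x, y⁆⁆ := (lie_skew _ _).symm
  simp only [lie_lie, lie_add, lie_sub, lie_neg, lie_smul, lie_zero, lie_self, r0, hx, hy, r1, r2, r3] at h4_0
  have r4 : ⁅x, ⁅y, ⁅x, ⁅x, ⁅x, y⁆⁆⁆⁆⁆ = (1/2 : ℂ) • ⁅x, ⁅x, ⁅x, ⁅y, ⁅x, y⁆⁆⁆⁆⁆ := by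
    linear_combination (norm := module) (1/2 : ℂ) • h4_0
  have h5_0 : ⁅⁅x, y⁆, ⁅y, ⁅x, ⁅y, ⁅y, ⁅x, y⁆⁆⁆⁆⁆⁆ = -⁅⁅y, ⁅x, ⁅y, ⁅y, ⁅x, y⁆⁆⁆⁆⁆, ⁅x, y⁆⁆ := (lie_skew _ _).symm
  simp only [lie_lie, lie_add, lie_sub, lie_neg, lie_smul, lie_zero, lie_self, r0, hx, hy, r1, r2, r3, r4] at h5_0
  have r5 : ⁅y, ⁅y, ⁅y, ⁅x, ⁅x, ⁅y, ⁅x, y⁆⁆⁆⁆⁆⁆⁆ = (2 : ℂ) • ⁅x, ⁅y, ⁅y, ⁅x, ⁅y, ⁅y, ⁅x, y⁆⁆⁆⁆⁆⁆⁆ + (-8 : ℂ) • ⁅y, ⁅x, ⁅y, ⁅x, ⁅y, ⁅y, ⁅x, y⁆⁆⁆⁆⁆⁆⁆ + (1 : ℂ) • ⁅y, ⁅y, ⁅x, ⁅x, ⁅y, ⁅y, ⁅x, y⁆⁆⁆⁆⁆⁆⁆ + (3 : ℂ) • ⁅y, ⁅y, ⁅x, ⁅y, ⁅x, ⁅y,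 ⁅x, y⁆⁆⁆⁆⁆⁆⁆ := by
    linear_combination (norm := module) (-1 : ℂ) • h5_0
  have h6_0 : ⁅⁅x, y⁆, ⁅x, ⁅x, ⁅y, ⁅y, ⁅x, y⁆⁆⁆⁆⁆⁆ = -⁅⁅x, ⁅x, ⁅y, ⁅y, ⁅x, y⁆⁆⁆⁆⁆, ⁅x, y⁆⁆ := (lie_skew _ _).symm
  simp only [lie_lie, lie_add, lie_sub, lie_neg, lie_smul, lie_zero, lie_self, r0, hx, hy, r1, r2, r3, r4, r5] at h6_0
  have h6_1 : ⁅⁅x, y⁆, ⁅x, ⁅y, ⁅x, ⁅y, ⁅x, y⁆⁆⁆⁆⁆⁆ = -⁅⁅x, ⁅y, ⁅x, ⁅y, ⁅x, y⁆⁆⁆⁆⁆, ⁅x, y⁆⁆ := (lie_skew _ _).symm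
  simp only [lie_lie, lie_add, lie_sub, lie_neg, lie_smul, lie_zero, lie_self, r0, hx, hy, r1, r2, r3, r4, r5] at h6_1
  have r6 : ⁅y, ⁅x, ⁅y, ⁅x, ⁅x, ⁅y, ⁅x, y⁆⁆⁆⁆⁆⁆⁆ = (2/3 : ℂ) • ⁅x, ⁅y, ⁅x, ⁅x, ⁅y, ⁅y, ⁅x, y⁆⁆⁆⁆⁆⁆⁆ + (-2/3 : ℂ) • ⁅y, ⁅x, ⁅x, ⁅x, ⁅y, ⁅y, ⁅x, y⁆⁆⁆⁆⁆⁆⁆ + (3/2 : ℂ) • ⁅y, ⁅x, ⁅x, ⁅y, ⁅x, ⁅y, ⁅x, y⁆⁆⁆⁆⁆⁆⁆ + (-1 : ℂ) • ⁅x, ⁅y, ⁅x, ⁅y, ⁅x, ⁅y, ⁅x, y⁆⁆⁆⁆⁆⁆⁆ + (1/2 : ℂ) • ⁅x, ⁅y, ⁅y, ⁅x, ⁅x, ⁅y, ⁅x, y⁆⁆⁆⁆⁆⁆⁆ := by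
    linear_combination (norm := module) (-1/6 : ℂ) • h6_0 + (1/4 : ℂ) • h6_1
  have r7 : ⁅y, ⁅y, ⁅x, ⁅x, ⁅x, ⁅y, ⁅x, y⁆⁆⁆⁆⁆⁆⁆ = (-4 : ℂ) • ⁅x, ⁅y, ⁅x, ⁅y, ⁅x, ⁅y, ⁅x, y⁆⁆⁆⁆⁆⁆⁆ + (4/3 : ℂ) • ⁅x, ⁅y, ⁅x, ⁅x, ⁅y, ⁅y, ⁅x, y⁆⁆⁆⁆⁆⁆⁆ + (-4/3 : ℂ) • ⁅y, ⁅x, ⁅x, ⁅x, ⁅y, ⁅y, ⁅x, y⁆⁆⁆⁆⁆⁆⁆ + (3 : ℂ) • ⁅y, ⁅x, ⁅x, ⁅y, ⁅x, ⁅y, ⁅x, y⁆⁆⁆⁆⁆⁆⁆ + (1 : ℂ) • ⁅x, ⁅y, ⁅y, ⁅x, ⁅x, ⁅y, ⁅x, y⁆⁆⁆⁆⁆⁆⁆ + (2 : ℂ) • ⁅x, ⁅x, ⁅y, ⁅x, ⁅y, ⁅y, ⁅x, y⁆⁆⁆⁆⁆⁆⁆ := by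
    linear_combination (norm := module) (-1/3 : ℂ) • h6_0 + (3/2 : ℂ) • h6_1
  have h8_0 : ⁅⁅x, y⁆, ⁅x, ⁅y, ⁅x, ⁅y, ⁅y, ⁅x, y⁆⁆⁆⁆⁆⁆⁆ = -⁅⁅x, ⁅y, ⁅x, ⁅y, ⁅y, ⁅x, y⁆⁆⁆⁆⁆⁆, ⁅x, y⁆⁆ := (lie_skew _ _).symm
  simp only [lie_lie, lie_add, lie_sub, lie_neg, lie_smul, lie_zero, lie_self, r0, hx, hy, r1, r2, r3, r4, r5, r6, r7] at h8_0
  have r8 : ⁅y, ⁅y, ⁅x, ⁅x, ⁅y, ⁅x, ⁅y, ⁅x, y⁆⁆⁆⁆⁆⁆⁆⁆ = (8 : ℂ) • ⁅x, ⁅y, ⁅x, ⁅y, ⁅x, ⁅y, ⁅y, ⁅x, y⁆⁆⁆⁆⁆⁆⁆⁆ + (4/3 : ℂ) • ⁅y, ⁅x, ⁅x, ⁅y, ⁅x, ⁅y, ⁅y, ⁅x, y⁆⁆⁆⁆⁆⁆⁆⁆ + (-2 : ℂ) • ⁅x, ⁅x, ⁅y, ⁅y, ⁅x, ⁅y, ⁅y,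 ⁅x, y⁆⁆⁆⁆⁆⁆⁆⁆ + (-16/9 : ℂ) • ⁅y, ⁅x, ⁅y, ⁅x, ⁅x, ⁅y, ⁅y, ⁅x, y⁆⁆⁆⁆⁆⁆⁆⁆ + (10/9 : ℂ) • ⁅y, ⁅y, ⁅x, ⁅x, ⁅x, ⁅y, ⁅y, ⁅x, y⁆⁆⁆⁆⁆⁆⁆⁆ + (-4/3 : ℂ) • ⁅x, ⁅y, ⁅y, ⁅x, ⁅x, ⁅y, ⁅y, ⁅x, y⁆⁆⁆⁆⁆⁆⁆⁆ + (-2/3 : ℂ) • ⁅y, ⁅x, ⁅y, ⁅x, ⁅y, ⁅x, ⁅y, ⁅x, y⁆⁆⁆⁆⁆⁆⁆⁆ + (5/3 : ℂ) • ⁅y, ⁅x, ⁅y, ⁅y, ⁅x, ⁅x, ⁅y, ⁅x, y⁆⁆⁆⁆⁆⁆⁆⁆ + (-2 : ℂ) • ⁅x, ⁅y, ⁅y, ⁅x, ⁅y, ⁅x, ⁅y, ⁅x, y⁆⁆⁆⁆⁆⁆⁆⁆ := by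
    linear_combination (norm := module) (-2/3 : ℂ) • h8_0
  have s1_1 : Sp e 1 1 ({⁅x, y⁆} : Set L) := by
    refine Sp.step s0_1 s1_0 ?_ ?_
    · rw [← hx0]
      rintro s (rfl)
      · exact spt
    · rw [← hy0]
      rintro s (rfl)
      · rw [r0]; exact spt
  have s1_2 : Sp e 1 2 ({⁅y, ⁅x, y⁆⁆} : Set L) := by
    refine Sp.step s0_2 s1_1 ?_ ?_
    · intro s hs; exact hs.elim
    · rw [← hy0]
      rintro s (rfl)
      · exact spt
  have s2_1 : Sp e 2 1 ({⁅x, ⁅x, y⁆⁆} : Set L) := by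
    refine Sp.step s1_1 s2_0 ?_ ?_
    · rw [← hx0]
      rintro s (rfl)
      · exact spt
    · intro s hs; exact hs.elim
  have s1_3 : Sp e 1 3 ({⁅y, ⁅y, ⁅x, y⁆⁆⁆} : Set L) := by
    refine Sp.step s0_3 s1_2 ?_ ?_
    · intro s hs; exact hs.elim
    · rw [← hy0]
      rintro s (rfl)
      · exact spt
  have s2_2 : Sp e 2 2 ({⁅x, ⁅y, ⁅x, y⁆⁆⁆} : Set L) := by
    refine Sp.step s1_2 s2_1 ?_ ?_
    · rw [← hx0]
      rintro s (rfl)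
      · exact spt
    · rw [← hy0]
      rintro s (rfl)
      · rw [r1]; exact spt
  have s3_1 : Sp e 3 1 ({⁅x, ⁅x, ⁅x, y⁆⁆⁆} : Set L) := by
    refine Sp.step s2_1 s3_0 ?_ ?_
    · rw [← hx0]
      rintro s (rfl)
      · exact spt
    · intro s hs; exact hs.elim
  have s1_4 : Sp e 1 4 (∅ : Set L) := by
    refine Sp.step s0_4 s1_3 ?_ ?_
    · intro s hs; exact hs.elim
    · rw [← hy0]
      rintro s (rfl)
      · rw [hy]; exact spt
  have s2_3 : Sp e 2 3 ({⁅x, ⁅y, ⁅y, ⁅x, y⁆⁆⁆⁆, ⁅y, ⁅x, ⁅y, ⁅x, y⁆⁆⁆⁆} : Set L) := by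
    refine Sp.step s1_3 s2_2 ?_ ?_
    · rw [← hx0]
      rintro s (rfl)
      · exact spt
    · rw [← hy0]
      rintro s (rfl)
      · exact spt
  have s3_2 : Sp e 3 2 ({⁅x, ⁅x, ⁅y, ⁅x, y⁆⁆⁆⁆, ⁅y, ⁅x, ⁅x, ⁅x, y⁆⁆⁆⁆} : Set L) := by
    refine Sp.step s2_2 s3_1 ?_ ?_
    · rw [← hx0]
      rintro s (rfl)
      · exact spt
    · rw [← hy0]
      rintro s (rfl)
      · exact spt
  have s4_1 : Sp e 4 1 (∅ : Set L) := by
    refine Sp.step s3_1 s4_0 ?_ ?_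
    · rw [← hx0]
      rintro s (rfl)
      · rw [hx]; exact spt
    · intro s hs; exact hs.elim
  have s1_5 : Sp e 1 5 (∅ : Set L) := by
    refine Sp.step s0_5 s1_4 ?_ ?_
    · intro s hs; exact hs.elim
    · intro s hs; exact hs.elim
  have s2_4 : Sp e 2 4 ({⁅y, ⁅x, ⁅y, ⁅y, ⁅x, y⁆⁆⁆⁆⁆} : Set L) := by
    refine Sp.step s1_4 s2_3 ?_ ?_
    · intro s hs; exact hs.elim
    · rw [← hy0]
      rintro s (rfl | rfl)
      · exact spt
      · rw [r2]; exact spt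
  have s3_3 : Sp e 3 3 ({⁅x, ⁅x, ⁅y, ⁅y, ⁅x, y⁆⁆⁆⁆⁆, ⁅x, ⁅y, ⁅x, ⁅y, ⁅x, y⁆⁆⁆⁆⁆, ⁅y, ⁅x, ⁅x, ⁅y, ⁅x, y⁆⁆⁆⁆⁆} : Set L) := by
    refine Sp.step s2_3 s3_2 ?_ ?_
    · rw [← hx0]
      rintro s (rfl | rfl)
      · exact spt
      · exact spt
    · rw [← hy0]
      rintro s (rfl | rfl)
      · exact spt
      · rw [r3]; exact spt
  have s4_2 : Sp e 4 2 ({⁅x, ⁅x, ⁅x, ⁅y, ⁅x, y⁆⁆⁆⁆⁆} : Set L) := by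
    refine Sp.step s3_2 s4_1 ?_ ?_
    · rw [← hx0]
      rintro s (rfl | rfl)
      · exact spt
      · rw [r4]; exact spt
    · intro s hs; exact hs.elim
  have s2_5 : Sp e 2 5 ({⁅y, ⁅y, ⁅x, ⁅y, ⁅y, ⁅x, y⁆⁆⁆⁆⁆⁆} : Set L) := by
    refine Sp.step s1_5 s2_4 ?_ ?_
    · intro s hs; exact hs.elim
    · rw [← hy0]
      rintro s (rfl)
      · exact spt
  have s3_4 : Sp e 3 4 ({⁅x, ⁅y, ⁅x, ⁅y, ⁅y, ⁅x, y⁆⁆⁆⁆⁆⁆, ⁅y, ⁅x, ⁅x, ⁅y, ⁅y, ⁅x, y⁆⁆⁆⁆⁆⁆, ⁅y, ⁅x, ⁅y, ⁅x, ⁅y, ⁅x, y⁆⁆⁆⁆⁆⁆, ⁅y, ⁅y, ⁅x, ⁅x, ⁅y, ⁅x, y⁆⁆⁆⁆⁆⁆} : Set L) := by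
    refine Sp.step s2_4 s3_3 ?_ ?_
    · rw [← hx0]
      rintro s (rfl)
      · exact spt
    · rw [← hy0]
      rintro s (rfl | rfl | rfl)
      · exact spt
      · exact spt
      · exact spt
  have s4_3 : Sp e 4 3 ({⁅x, ⁅x, ⁅x, ⁅y, ⁅y, ⁅x, y⁆⁆⁆⁆⁆⁆, ⁅x, ⁅x, ⁅y, ⁅x, ⁅y, ⁅x, y⁆⁆⁆⁆⁆⁆, ⁅x, ⁅y, ⁅x, ⁅x, ⁅y, ⁅x, y⁆⁆⁆⁆⁆⁆, ⁅y, ⁅x, ⁅x, ⁅x, ⁅y, ⁅x, y⁆⁆⁆⁆⁆⁆} : Set L) := by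
    refine Sp.step s3_3 s4_2 ?_ ?_
    · rw [← hx0]
      rintro s (rfl | rfl | rfl)
      · exact spt
      · exact spt
      · exact spt
    · rw [← hy0]
      rintro s (rfl)
      · exact spt
  have s3_5 : Sp e 3 5 ({⁅x, ⁅y, ⁅y, ⁅x, ⁅y, ⁅y, ⁅x, y⁆⁆⁆⁆⁆⁆⁆, ⁅y, ⁅x, ⁅y, ⁅x, ⁅y, ⁅y, ⁅x, y⁆⁆⁆⁆⁆⁆⁆, ⁅y, ⁅y, ⁅x, ⁅x, ⁅y, ⁅y, ⁅x, y⁆⁆⁆⁆⁆⁆⁆, ⁅y, ⁅y, ⁅x, ⁅y, ⁅x, ⁅y, ⁅x, y⁆⁆⁆⁆⁆⁆⁆} : Set L) := by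
    refine Sp.step s2_5 s3_4 ?_ ?_
    · rw [← hx0]
      rintro s (rfl)
      · exact spt
    · rw [← hy0]
      rintro s (rfl | rfl | rfl | rfl)
      · exact spt
      · exact spt
      · exact spt
      · rw [r5]; exact spt
  have s4_4 : Sp e 4 4 ({⁅x, ⁅x, ⁅y, ⁅x, ⁅y, ⁅y, ⁅x, y⁆⁆⁆⁆⁆⁆⁆, ⁅x, ⁅y, ⁅x, ⁅x, ⁅y, ⁅y, ⁅x, y⁆⁆⁆⁆⁆⁆⁆, ⁅x, ⁅y, ⁅x, ⁅y, ⁅x, ⁅y, ⁅x, y⁆⁆⁆⁆⁆⁆⁆, ⁅x, ⁅y, ⁅y, ⁅x, ⁅x, ⁅y, ⁅x, y⁆⁆⁆⁆⁆⁆⁆, ⁅y, ⁅x, ⁅x, ⁅x, ⁅y, ⁅y, ⁅x, y⁆⁆⁆⁆⁆⁆⁆, ⁅y, ⁅x, ⁅x, ⁅y, ⁅x, ⁅y, ⁅x, y⁆⁆⁆⁆⁆⁆⁆} : Set L) := by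
    refine Sp.step s3_4 s4_3 ?_ ?_
    · rw [← hx0]
      rintro s (rfl | rfl | rfl | rfl)
      · exact spt
      · exact spt
      · exact spt
      · exact spt
    · rw [← hy0]
      rintro s (rfl | rfl | rfl | rfl)
      · exact spt
      · exact spt
      · rw [r6]; exact spt
      · rw [r7]; exact spt
  have s4_5 : Sp e 4 5 ({⁅x, ⁅x, ⁅y, ⁅y, ⁅x, ⁅y, ⁅y, ⁅x, y⁆⁆⁆⁆⁆⁆⁆⁆, ⁅x, ⁅y, ⁅x, ⁅y, ⁅x, ⁅y, ⁅y, ⁅x, y⁆⁆⁆⁆⁆⁆⁆⁆, ⁅x, ⁅y, ⁅y, ⁅x, ⁅x, ⁅y, ⁅y, ⁅x, y⁆⁆⁆⁆⁆⁆⁆⁆, ⁅x, ⁅y, ⁅y, ⁅x, ⁅y, ⁅x, ⁅y, ⁅x, y⁆⁆⁆⁆⁆⁆⁆⁆, ⁅y, ⁅x, ⁅x, ⁅y, ⁅x, ⁅y, ⁅y, ⁅x, y⁆⁆⁆⁆⁆⁆⁆⁆, ⁅y, ⁅x, ⁅y, ⁅x, ⁅x, ⁅y, ⁅y, ⁅x,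 y⁆⁆⁆⁆⁆⁆⁆⁆, ⁅y, ⁅x, ⁅y, ⁅x, ⁅y, ⁅x, ⁅y, ⁅x, y⁆⁆⁆⁆⁆⁆⁆⁆, ⁅y, ⁅x, ⁅y, ⁅y, ⁅x, ⁅x, ⁅y, ⁅x, y⁆⁆⁆⁆⁆⁆⁆⁆, ⁅y, ⁅y, ⁅x, ⁅x, ⁅x, ⁅y, ⁅y, ⁅x, y⁆⁆⁆⁆⁆⁆⁆⁆} : Set L) := by
    refine Sp.step s3_5 s4_4 ?_ ?_
    · rw [← hx0]
      rintro s (rfl | rfl | rfl | rfl)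
      · exact spt
      · exact spt
      · exact spt
      · exact spt
    · rw [← hy0]
      rintro s (rfl | rfl | rfl | rfl | rfl | rfl)
      · exact spt
      · exact spt
      · exact spt
      · exact spt
      · exact spt
      · rw [r8]; exact spt
  convert s4_5 using 1
  simp only [Set.image_insert_eq, Set.image_singleton, rn, ← hx0, ← hy0]

section Triangular

variable {L : Type*} [LieRing L] [LieAlgebra ℂ L]

/-- The non-Serre Chevalley relations. -/
structure ChevRel (A : Matrix (Fin 2) (Fin 2) ℤ) (e f h : Fin 2 → L) : Prop where
  hh : ∀ i j, ⁅h i, h j⁆ = 0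
  ef : ∀ i j, ⁅e i, f j⁆ = if i = j then h i else 0
  he : ∀ i j, ⁅h i, e j⁆ = (A i j : ℂ) • e j
  hf : ∀ i j, ⁅h i, f j⁆ = -((A i j : ℂ) • f j)

theorem ChevRel.symm {A : Matrix (Fin 2) (Fin 2) ℤ} {e f h : Fin 2 → L} (R : ChevRel A e f h) :
    ChevRel A f e (fun i => - h i) where
  hh i j := by simp [R.hh]
  ef i j := by
    rw [← lie_skew, R.ef]
    by_cases hij : i = j
    · subst hij; simp
    · simp [hij, Ne.symm hij]
  he i j := by simp [R.hf]
  hf i j := by simp [R.he]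

theorem lie_rn (e : Fin 2 → L) (z : L) (d : Fin 2 → ℂ) (hz : ∀ i, ⁅z, e i⁆ = d i • e i)
    (w : List (Fin 2)) : ⁅z, rn e w⁆ = (w.count 0 * d 0 + w.count 1 * d 1) • rn e w := by
  induction w with
  | nil => simp [rn]
  | cons i w ih =>
    by_cases hw : w = []
    · subst hw
      change ⁅z, e i⁆ = _ • e i
      rw [hz]
      fin_cases i <;> simp
    · rw [rn_cons e i w hw, leibniz_lie, ih, hz, smul_lie, lie_smul, ← add_smul]
      congr 1
      fin_cases i <;> simp <;> ring

theorem span_lie_mem (x : L) (S : Set L) (T : Submodule ℂ L)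
    (h : ∀ s ∈ S, ⁅s, x⁆ ∈ T) (z : L) (hz : z ∈ Submodule.span ℂ S) : ⁅z, x⁆ ∈ T := by
  rw [← lie_skew]
  refine T.neg_mem (lie_mem_span x S T (fun s hs => ?_) z hz)
  rw [← lie_skew]
  exact T.neg_mem (h s hs)

theorem ChevRel.lie_f {A : Matrix (Fin 2) (Fin 2) ℤ} {e f h : Fin 2 → L} (R : ChevRel A e f h)
    (i : Fin 2) (w : List (Fin 2)) :
    ⁅f i, rn e w⁆ ∈ Submodule.span ℂ (Set.range (rn e) ∪ Set.range h) := by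
  have hE : ∀ w, rn e w ∈ Submodule.span ℂ (Set.range (rn e) ∪ Set.range h) := fun w =>
    Submodule.subset_span (Or.inl ⟨w, rfl⟩)
  have hH : ∀ i, h i ∈ Submodule.span ℂ (Set.range (rn e) ∪ Set.range h) := fun w =>
    Submodule.subset_span (Or.inr ⟨w, rfl⟩)
  have hfe : ∀ j, ⁅f i, e j⁆ = if i = j then - h i else 0 := fun j => R.symm.ef i j
  induction w with
  | nil => rw [rn, lie_zero]; exact Submodule.zero_mem _
  | cons j w ih =>
    by_cases hw : w = []
    · subst hw
      change ⁅f i, e j⁆ ∈ _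
      rw [hfe]
      split_ifs
      · exact Submodule.neg_mem _ (hH i)
      · exact Submodule.zero_mem _
    · rw [rn_cons e j w hw, leibniz_lie]
      refine Submodule.add_mem _ ?_ ?_
      · rw [hfe]
        split_ifs
        · rw [neg_lie, lie_rn e (h i) (fun j => (A i j : ℂ)) (R.he i)]
          exact Submodule.neg_mem _ (Submodule.smul_mem _ _ (hE w))
        · rw [zero_lie]; exact Submodule.zero_mem _
      · refine lie_mem_span _ _ _ ?_ _ ih
        rintro s (⟨v, rfl⟩ | ⟨k, rfl⟩)
        · by_cases hv : v = []
          · subst hv; rw [rn, lie_zero]; exact Submodule.zero_mem _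
          · rw [← rn_cons e j v hv]; exact hE _
        · rw [← lie_skew, R.he]
          exact Submodule.neg_mem _ (Submodule.smul_mem _ _ (hE [j]))

/-- `n₋ + h + n₊`. -/
def TT (e f h : Fin 2 → L) : Submodule ℂ L :=
  Submodule.span ℂ (Set.range (rn e) ∪ Set.range h ∪ Set.range (rn f))

theorem TT_symm (e f h : Fin 2 → L) : TT f e (fun i => - h i) ≤ TT e f h := by
  refine Submodule.span_le.mpr ?_
  rintro _ ((⟨w, rfl⟩ | ⟨i, rfl⟩) | ⟨w, rfl⟩)
  · exact Submodule.subset_span (Or.inr ⟨w, rfl⟩)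
  · exact Submodule.neg_mem _ (Submodule.subset_span (Or.inl (Or.inr ⟨i, rfl⟩)))
  · exact Submodule.subset_span (Or.inl (Or.inl ⟨w, rfl⟩))

theorem ChevRel.e_TT {A : Matrix (Fin 2) (Fin 2) ℤ} {e f h : Fin 2 → L} (R : ChevRel A e f h)
    (i : Fin 2) (z : L) (hz : z ∈ TT e f h) : ⁅e i, z⁆ ∈ TT e f h := by
  have hE : ∀ w, rn e w ∈ TT e f h := fun w =>
    Submodule.subset_span (Or.inl (Or.inl ⟨w, rfl⟩))
  refine lie_mem_span _ _ _ ?_ _ hz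
  rintro s ((⟨v, rfl⟩ | ⟨k, rfl⟩) | ⟨w, rfl⟩)
  · by_cases hv : v = []
    · subst hv; rw [rn, lie_zero]; exact Submodule.zero_mem _
    · rw [← rn_cons e i v hv]; exact hE _
  · rw [← lie_skew, R.he]
    exact Submodule.neg_mem _ (Submodule.smul_mem _ _ (hE [i]))
  · refine TT_symm e f h ?_
    exact Submodule.span_mono Set.subset_union_left (R.symm.lie_f i w)

theorem ChevRel.f_TT {A : Matrix (Fin 2) (Fin 2) ℤ} {e f h : Fin 2 → L} (R : ChevRel A e f h)
    (i : Fin 2) (z : L) (hz : z ∈ TT e f h) : ⁅f i, z⁆ ∈ TT e f h := by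
  refine TT_symm e f h (R.symm.e_TT i z ?_)
  have := TT_symm f e (fun i => - h i)
  simp only [neg_neg] at this
  exact this hz

theorem ChevRel.h_TT {A : Matrix (Fin 2) (Fin 2) ℤ} {e f h : Fin 2 → L} (R : ChevRel A e f h)
    (i : Fin 2) (z : L) (hz : z ∈ TT e f h) : ⁅h i, z⁆ ∈ TT e f h := by
  have : h i = ⁅e i, f i⁆ := by rw [R.ef]; simp
  rw [this, lie_lie]
  exact Submodule.sub_mem _ (R.e_TT i _ (R.f_TT i _ hz)) (R.f_TT i _ (R.e_TT i _ hz))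

/-- The weight space computation. -/
theorem weight_mem {e f h : Fin 2 → L} (R : ChevRel !![2, -3; -3, 2] e f h)
    (hT : TT e f h = ⊤) (x : L) (h0 : ⁅h 0, x⁆ = (-7 : ℂ) • x) (h1 : ⁅h 1, x⁆ = (-2 : ℂ) • x) :
    x ∈ Submodule.span ℂ (rn e '' {w | w.count 0 = 4 ∧ w.count 1 = 5}) := by
  obtain ⟨c0, c1, hc0, hc1⟩ : ∃ c0 c1 : ℂ, c0 = -(2 + 3 * Complex.I) / 5 ∧
    c1 = -(3 + 2 * Complex.I) / 5 := ⟨_, _, rfl, rfl⟩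
  obtain ⟨z, hz⟩ : ∃ z, z = c0 • h 0 + c1 • h 1 := ⟨_, rfl⟩
  have E1 : 2 * c0 - 3 * c1 = 1 := by rw [hc0, hc1]; ring
  have E2 : -3 * c0 + 2 * c1 = Complex.I := by rw [hc0, hc1]; ring
  have ze : ∀ i, ⁅z, e i⁆ = (![1, Complex.I] : Fin 2 → ℂ) i • e i := by
    intro i
    rw [hz, add_lie, smul_lie, smul_lie, R.he, R.he, smul_smul, smul_smul, ← add_smul]
    congr 1
    fin_cases i
    · simp; linear_combination E1
    · simp; linear_combination E2
  have zf : ∀ i, ⁅z, f i⁆ = (![-1, -Complex.I] : Fin 2 → ℂ) i • f i := by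
    intro i
    rw [hz, add_lie, smul_lie, smul_lie, R.hf, R.hf, smul_neg, smul_neg, smul_smul, smul_smul,
      ← neg_add, ← add_smul, ← neg_smul]
    congr 1
    fin_cases i
    · simp; linear_combination -E1
    · simp; linear_combination -E2
  have zh : ∀ i, ⁅z, h i⁆ = 0 := by
    intro i
    rw [hz, add_lie, smul_lie, smul_lie, R.hh, R.hh, smul_zero, smul_zero, add_zero]
  have zx : ⁅z, x⁆ = (4 + 5 * Complex.I) • x := by
    rw [hz, add_lie, smul_lie, smul_lie, h0, h1, smul_smul, smul_smul, ← add_smul]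
    congr 1
    linear_combination 4 * E1 + 5 * E2
  let D := LieAlgebra.ad ℂ L z
  have ind := Module.End.eigenspaces_iSupIndep D (4 + 5 * Complex.I)
  have other : ∀ (ν : ℂ) (s : L), ν ≠ 4 + 5 * Complex.I → ⁅z, s⁆ = ν • s →
      s ∈ ⨆ ν, ⨆ (_ : ν ≠ 4 + 5 * Complex.I), D.eigenspace ν := by
    intro ν s hν hs
    refine Submodule.mem_iSup_of_mem ν (Submodule.mem_iSup_of_mem hν ?_)
    rw [Module.End.mem_eigenspace_iff]
    exact hs
  have hx : x ∈ Submodule.span ℂ (rn e '' {w | w.count 0 = 4 ∧ w.count 1 = 5}) ⊔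
      ⨆ ν, ⨆ (_ : ν ≠ 4 + 5 * Complex.I), D.eigenspace ν := by
    have hx : x ∈ TT e f h := hT ▸ Submodule.mem_top
    refine Submodule.span_le.mpr ?_ hx
    rintro s ((⟨w, rfl⟩ | ⟨k, rfl⟩) | ⟨w, rfl⟩)
    · by_cases hw : w.count 0 = 4 ∧ w.count 1 = 5
      · exact Submodule.mem_sup_left (Submodule.subset_span ⟨w, hw, rfl⟩)
      · refine Submodule.mem_sup_right (other _ _ ?_ (lie_rn e z _ ze w))
        intro hc
        have hr := congrArg Complex.re hc
        have hi := congrArg Complex.im hc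
        simp at hr hi
        exact hw ⟨by exact_mod_cast hr, by exact_mod_cast hi⟩
    · refine Submodule.mem_sup_right (other 0 _ ?_ (by rw [zh, zero_smul]))
      intro hc
      have hr := congrArg Complex.re hc
      simp at hr
    · refine Submodule.mem_sup_right (other _ _ ?_ (lie_rn f z _ zf w))
      intro hc
      have hr := congrArg Complex.re hc
      simp at hr
      have : (0 : ℝ) ≤ (w.count 0 : ℝ) := Nat.cast_nonneg _
      linarith
  obtain ⟨a, ha, b, hb, hab⟩ := Submodule.mem_sup.mp hx
  have haE : a ∈ D.eigenspace (4 + 5 * Complex.I) := by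
    refine Submodule.span_le.mpr ?_ ha
    rintro s ⟨w, ⟨hw0, hw1⟩, rfl⟩
    refine Module.End.mem_eigenspace_iff.mpr ?_
    refine (lie_rn e z _ ze w).trans ?_
    rw [hw0, hw1]
    simp
  have hbE : b ∈ D.eigenspace (4 + 5 * Complex.I) := by
    have : b = x - a := by rw [← hab]; abel
    rw [this]
    refine Submodule.sub_mem _ ?_ haE
    exact Module.End.mem_eigenspace_iff.mpr zx
  have hb0 : b = 0 := by
    have := ind.le_bot ⟨hbE, hb⟩
    simpa using this
  rw [← hab, hb0, add_zero]
  exact ha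

end Triangular

section Spec

open KacMoody

/-- The Cartan matrix of the theorem. -/
abbrev A3 : Matrix (Fin 2) (Fin 2) ℤ := !![2, -3; -3, 2]

theorem free_induct (K : LieSubalgebra ℂ (FreeLie 2)) (hE : ∀ i, E i ∈ K) (hF : ∀ i, F i ∈ K)
    (hH : ∀ i, H i ∈ K) (x : FreeLie 2) : x ∈ K := by
  have hK : ∀ g : ChevalleyGen 2, FreeLieAlgebra.of ℂ g ∈ K := by
    rintro (i | i | i)
    · exact hE i
    · exact hF i
    · exact hH i
  let φ : FreeLie 2 →ₗ⁅ℂ⁆ K := FreeLieAlgebra.lift ℂ (fun g => ⟨FreeLieAlgebra.of ℂ g, hK g⟩)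
  have hφ : K.incl.comp φ = LieHom.id := by
    ext g
    simp [φ]
  have := congrArg (fun ψ : FreeLie 2 →ₗ⁅ℂ⁆ FreeLie 2 => ψ x) hφ
  simp at this
  rw [← this]
  exact (φ x).2

/-- The projection to `gA`. -/
noncomputable def pr : FreeLie 2 →ₗ⁅ℂ⁆ gA A3 where
  toLinearMap := (LieSubmodule.Quotient.mk' (serreIdeal A3) : FreeLie 2 →ₗ[ℂ] gA A3)
  map_lie' := by intro x y; rfl

theorem pr_eq_zero (x : FreeLie 2) (hx : x ∈ serreIdeal A3) : pr x = 0 :=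
  (LieSubmodule.Quotient.mk_eq_zero').mpr hx

theorem pr_rel (x : FreeLie 2) (hx : x ∈ serreRelations A3) : pr x = 0 :=
  pr_eq_zero x (LieSubmodule.subset_lieSpan hx)

theorem pr_surj : Function.Surjective pr := LieSubmodule.Quotient.surjective_mk' _

noncomputable def eb (i : Fin 2) : gA A3 := pr (E i)
noncomputable def fb (i : Fin 2) : gA A3 := pr (F i)
noncomputable def hb (i : Fin 2) : gA A3 := pr (H i)

theorem rel_gA : ChevRel A3 eb fb hb where
  hh i j := by
    have := pr_rel ⁅H i, H j⁆ (Or.inl (Or.inl (Or.inl (Or.inl (Or.inl ⟨i, j, rfl⟩)))))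
    rwa [LieHom.map_lie] at this
  ef i j := by
    have := pr_rel _ (Or.inl (Or.inl (Or.inl (Or.inl (Or.inr ⟨i, j, rfl⟩)))))
    rw [map_sub, sub_eq_zero, LieHom.map_lie] at this
    refine this.trans ?_
    split_ifs
    · rfl
    · exact map_zero _
  he i j := by
    have := pr_rel _ (Or.inl (Or.inl (Or.inl (Or.inr ⟨i, j, rfl⟩))))
    rw [map_sub, sub_eq_zero, LieHom.map_lie, map_smul] at this
    exact this
  hf i j := by
    have := pr_rel _ (Or.inl (Or.inl (Or.inr ⟨i, j, rfl⟩)))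
    rw [map_add, LieHom.map_lie, map_smul] at this
    exact eq_neg_of_add_eq_zero_left this

theorem serre_gA (i j : Fin 2) (hij : i ≠ j) : ⁅eb i, ⁅eb i, ⁅eb i, ⁅eb i, eb j⁆⁆⁆⁆ = 0 := by
  have h4 : (1 - A3 i j).toNat = 4 := by
    revert i j; decide
  have := pr_rel _ (Or.inl (Or.inr ⟨i, j, hij, rfl⟩))
  rw [h4] at this
  simp only [pow_succ, pow_zero, one_mul, Module.End.mul_apply, LieAlgebra.ad_apply, LieHom.map_lie] at this
  exact this

theorem serre_hx : ⁅eb 0, ⁅eb 0, ⁅eb 0, ⁅eb 0, eb 1⁆⁆⁆⁆ = 0 := serre_gA 0 1 (by decide)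
theorem serre_hy : ⁅eb 1, ⁅eb 1, ⁅eb 1, ⁅eb 0, eb 1⁆⁆⁆⁆ = 0 := by
  rw [← lie_skew (eb 0) (eb 1)]
  rw [lie_neg, lie_neg, lie_neg, serre_gA 1 0 (by decide), neg_zero]

theorem TT_top : TT eb fb hb = ⊤ := by
  have step1 : ∀ x : FreeLie 2, ∀ z ∈ TT eb fb hb, ⁅pr x, z⁆ ∈ TT eb fb hb := by
    intro x
    let K : LieSubalgebra ℂ (FreeLie 2) :=
      { carrier := {x | ∀ z ∈ TT eb fb hb, ⁅pr x, z⁆ ∈ TT eb fb hb}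
        zero_mem' := by intro z hz; rw [map_zero, zero_lie]; exact Submodule.zero_mem _
        add_mem' := by
          intro a b ha hb z hz
          rw [map_add, add_lie]
          exact Submodule.add_mem _ (ha z hz) (hb z hz)
        smul_mem' := by
          intro c a ha z hz
          rw [map_smul, smul_lie]
          exact Submodule.smul_mem _ _ (ha z hz)
        lie_mem' := by
          intro a b ha hb z hz
          rw [LieHom.map_lie, lie_lie]
          exact Submodule.sub_mem _ (ha _ (hb z hz)) (hb _ (ha z hz)) }
    exact free_induct K (fun i => rel_gA.e_TT i) (fun i => rel_gA.f_TT i) (fun i => rel_gA.h_TT i) x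
  let K : LieSubalgebra ℂ (FreeLie 2) :=
    { (TT eb fb hb).comap (pr : FreeLie 2 →ₗ[ℂ] gA A3) with
      lie_mem' := by
        intro a b ha hb'
        change pr ⁅a, b⁆ ∈ TT eb fb hb
        rw [LieHom.map_lie]
        exact step1 a _ hb' }
  rw [eq_top_iff]
  intro y _
  obtain ⟨x, rfl⟩ := pr_surj y
  refine free_induct K (fun i => ?_) (fun i => ?_) (fun i => ?_) x
  · exact Submodule.subset_span (Or.inl (Or.inl ⟨[i], rfl⟩))
  · exact Submodule.subset_span (Or.inr ⟨[i], rfl⟩)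
  · exact Submodule.subset_span (Or.inl (Or.inr ⟨i, rfl⟩))

end Spec

section SerreAbstract

variable {L : Type*} [LieRing L] [LieAlgebra ℂ L]

theorem ChevRel.serre_comm {e f h : Fin 2 → L} (R : ChevRel A3 e f h)
    (i j k : Fin 2) (hij : i ≠ j) : ⁅f k, rn e [i, i, i, i, j]⁆ = 0 := by
  have hAii : A3 i i = 2 := by clear hij; revert i; decide
  have hA : ∀ i j : Fin 2, i ≠ j → A3 i j = -3 := by
    intro i j hij
    fin_cases i <;> fin_cases j <;> simp_all
  have hAij : A3 i j = -3 := hA i j hij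
  have hAji : A3 j i = -3 := hA j i hij.symm
  have hfe : ∀ k j, ⁅f k, e j⁆ = if k = j then - h k else 0 := fun k j => R.symm.ef k j
  have hk : k = i ∨ k = j := by clear hAii hAij hAji; revert i j k; decide
  rcases hk with rfl | rfl
  · have hji := Ne.symm hij
    have h0 : ⁅h k, e j⁆ = (-3 : ℂ) • e j := by rw [R.he, hAij]; norm_num
    have he : ⁅h k, e k⁆ = (2 : ℂ) • e k := by rw [R.he, hAii]; norm_num
    have f0 : ⁅f k, e j⁆ = 0 := by rw [hfe]; simp [hij]
    have fe : ⁅f k, e k⁆ = - h k := by rw [hfe]; simp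
    have st : ∀ (y : L) (c d : ℂ), ⁅h k, y⁆ = c • y → ⁅h k, ⁅e k, y⁆⁆ = (c + 2) • ⁅e k, y⁆ := by
      intro y c d hy
      rw [leibniz_lie, hy, he, smul_lie, lie_smul, ← add_smul, add_comm]
    have h1 := st _ _ 0 h0
    have h2 := st _ _ 0 h1
    have h3 := st _ _ 0 h2
    change ⁅f k, ⁅e k, ⁅e k, ⁅e k, ⁅e k, e j⁆⁆⁆⁆⁆ = 0
    have f1 : ⁅f k, ⁅e k, e j⁆⁆ = (3 : ℂ) • e j := by
      rw [leibniz_lie, fe, f0, neg_lie, h0, lie_zero]; module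
    have f2 : ⁅f k, ⁅e k, ⁅e k, e j⁆⁆⁆ = (4 : ℂ) • ⁅e k, e j⁆ := by
      rw [leibniz_lie, fe, f1, neg_lie, h1, lie_smul]; module
    have f3 : ⁅f k, ⁅e k, ⁅e k, ⁅e k, e j⁆⁆⁆⁆ = (3 : ℂ) • ⁅e k, ⁅e k, e j⁆⁆ := by
      rw [leibniz_lie, fe, f2, neg_lie, h2, lie_smul]; module
    rw [leibniz_lie, fe, f3, neg_lie, h3, lie_smul]; module
  · have f0 : ⁅f k, e i⁆ = 0 := by rw [hfe]; simp [Ne.symm hij]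
    have fe : ⁅f k, e k⁆ = - h k := by rw [hfe]; simp
    have eh : ⁅e i, h k⁆ = (3 : ℂ) • e i := by
      rw [← lie_skew, R.he, hAji]; norm_num
    change ⁅f k, ⁅e i, ⁅e i, ⁅e i, ⁅e i, e k⁆⁆⁆⁆⁆ = 0
    simp only [leibniz_lie (f k) (e i), f0, fe, zero_lie, zero_add, lie_neg, eh, lie_smul, lie_self,
      smul_zero, lie_zero, neg_zero]

end SerreAbstract

section Rep

attribute [local instance] LieRing.ofAssociativeRing

/-- The tensor algebra on two letters, as a vector space. -/
abbrev Fsp : Type := List (Fin 2) →₀ ℂ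

/-- The vector of a word. -/
noncomputable def vw (w : List (Fin 2)) : Fsp := Finsupp.single w 1

theorem end_ext {M : Type*} [AddCommGroup M] [Module ℂ M] (a b : Fsp →ₗ[ℂ] M)
    (h : ∀ w, a (vw w) = b (vw w)) : a = b := by
  refine Finsupp.lhom_ext' fun w => ?_
  ext
  exact h w

noncomputable def eo (i : Fin 2) : Module.End ℂ Fsp := Finsupp.lmapDomain ℂ ℂ (List.cons i)

theorem eo_vw (i : Fin 2) (w : List (Fin 2)) : eo i (vw w) = vw (i :: w) := by
  simp [eo, vw]

/-- Weight of a word. -/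
def wtw (i : Fin 2) : List (Fin 2) → ℂ
  | [] => 0
  | j :: w => (A3 i j : ℂ) + wtw i w

noncomputable def ho (i : Fin 2) : Module.End ℂ Fsp :=
  Finsupp.linearCombination ℂ (fun w => wtw i w • vw w)

theorem ho_vw (i : Fin 2) (w : List (Fin 2)) : ho i (vw w) = wtw i w • vw w := by
  simp [ho, vw]

noncomputable def fv (i : Fin 2) : List (Fin 2) → Fsp
  | [] => 0
  | j :: w => eo j (fv i w) - if j = i then wtw i w • vw w else 0

noncomputable def fo (i : Fin 2) : Module.End ℂ Fsp :=
  Finsupp.linearCombination ℂ (fv i)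

theorem fo_vw (i : Fin 2) (w : List (Fin 2)) : fo i (vw w) = fv i w := by
  simp [fo, vw]

theorem he_op (i j : Fin 2) (z : Fsp) : ho i (eo j z) = eo j (ho i z) + (A3 i j : ℂ) • eo j z := by
  have : ho i ∘ₗ eo j = eo j ∘ₗ ho i + (A3 i j : ℂ) • eo j := by
    refine end_ext _ _ fun w => ?_
    simp only [LinearMap.comp_apply, LinearMap.add_apply, LinearMap.smul_apply, eo_vw, ho_vw,
      map_smul, wtw]
    module
  exact LinearMap.congr_fun this z

theorem hf_op (i j : Fin 2) (w : List (Fin 2)) :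
    ho i (fv j w) = wtw i w • fv j w - (A3 i j : ℂ) • fv j w := by
  induction w with
  | nil => simp [fv]
  | cons k w ih =>
    rw [fv, map_sub, he_op, ih]
    by_cases hk : k = j
    · subst hk
      simp only [if_true, map_smul, map_sub, ho_vw, wtw]
      module
    · simp only [hk, if_false, map_smul, map_sub, map_zero, wtw]
      module

theorem rel_op : ChevRel A3 eo fo ho where
  hh i j := by
    refine end_ext _ _ fun w => ?_
    simp only [LieRing.of_associative_ring_bracket, LinearMap.sub_apply, Module.End.mul_apply,
      ho_vw, map_smul, LinearMap.zero_apply]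
    module
  ef i j := by
    refine end_ext _ _ fun w => ?_
    simp only [LieRing.of_associative_ring_bracket, LinearMap.sub_apply, Module.End.mul_apply,
      eo_vw, fo_vw, fv]
    by_cases h : i = j
    · subst h
      simp [ho_vw]
    · simp [h]
  he i j := by
    refine LinearMap.ext fun z => ?_
    simp only [LieRing.of_associative_ring_bracket, LinearMap.sub_apply, Module.End.mul_apply,
      LinearMap.smul_apply, he_op]
    module
  hf i j := by
    refine end_ext _ _ fun w => ?_
    simp only [LieRing.of_associative_ring_bracket, LinearMap.sub_apply, Module.End.mul_apply,
      LinearMap.smul_apply, LinearMap.neg_apply, ho_vw, fo_vw, map_smul, hf_op]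
    module

/-- The positive Serre operators. -/
noncomputable def So (i j : Fin 2) : Module.End ℂ Fsp := rn eo [i, i, i, i, j]

theorem comm_apply (a b : Module.End ℂ Fsp) (y : Fsp) : a (b y) = b (a y) + ⁅a, b⁆ y := by
  change a (b y) = b (a y) + (a (b y) - b (a y))
  abel

theorem So_f (i j k : Fin 2) (hij : i ≠ j) (y : Fsp) : fo k (So i j y) = So i j (fo k y) := by
  rw [comm_apply, So, rel_op.serre_comm i j k hij, LinearMap.zero_apply, add_zero]

theorem So_h (i j k : Fin 2) : ∃ c : ℂ, ∀ y : Fsp,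
    ho k (So i j y) = So i j (ho k y) + c • So i j y := by
  refine ⟨([i, i, i, i, j].count 0 * (A3 k 0 : ℂ) + [i, i, i, i, j].count 1 * (A3 k 1 : ℂ)), fun y => ?_⟩
  rw [comm_apply, So, lie_rn eo (ho k) (fun j => (A3 k j : ℂ)) (rel_op.he k), LinearMap.smul_apply]

theorem To_zero (i j : Fin 2) (hij : i ≠ j) : rn fo [i, i, i, i, j] = 0 := by
  refine end_ext _ _ fun w => ?_
  rw [LinearMap.zero_apply]
  induction w with
  | nil => 
    have h0 : ∀ i, fo i (vw []) = 0 := fun i => by rw [fo_vw, fv]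
    simp only [rn, LieRing.of_associative_ring_bracket, LinearMap.sub_apply, Module.End.mul_apply,
      h0, map_zero, sub_zero]
  | cons k w ih =>
    have := comm_apply (eo k) (rn fo [i, i, i, i, j]) (vw w)
    rw [rel_op.symm.serre_comm i j k hij, ih, map_zero, eo_vw, LinearMap.zero_apply, add_zero] at this
    exact this.symm

/-- Prefix by a word. -/
noncomputable def Ew : List (Fin 2) → Fsp → Fsp
  | [], y => y
  | i :: u, y => eo i (Ew u y)

/-- The ideal generated by the Serre elements. -/
noncomputable def II : Submodule ℂ Fsp :=
  Submodule.span ℂ {x | ∃ u i j y, i ≠ j ∧ x = Ew u (So i j y)}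

theorem map_II (a : Module.End ℂ Fsp) (h : ∀ u i j y, i ≠ j → a (Ew u (So i j y)) ∈ II) (y : Fsp)
    (hy : y ∈ II) : a y ∈ II := by
  have : II ≤ II.comap a := by
    refine Submodule.span_le.mpr ?_
    rintro x ⟨u, i, j, y, hij, rfl⟩
    exact h u i j y hij
  exact this hy

theorem mem_II (u : List (Fin 2)) (i j : Fin 2) (hij : i ≠ j) (y : Fsp) : Ew u (So i j y) ∈ II :=
  Submodule.subset_span ⟨u, i, j, y, hij, rfl⟩

theorem e_II (k : Fin 2) (y : Fsp) (hy : y ∈ II) : eo k y ∈ II :=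
  map_II _ (fun u i j y hij => mem_II (k :: u) i j hij y) y hy

theorem h_II (k : Fin 2) (y : Fsp) (hy : y ∈ II) : ho k y ∈ II := by
  refine map_II _ (fun u i j y hij => ?_) y hy
  induction u with
  | nil =>
    obtain ⟨c, hc⟩ := So_h i j k
    rw [Ew, hc]
    exact Submodule.add_mem _ (mem_II [] i j hij _)
      (Submodule.smul_mem _ _ (mem_II [] i j hij _))
  | cons l u ih =>
    rw [Ew, he_op]
    exact Submodule.add_mem _ (e_II _ _ ih)
      (Submodule.smul_mem _ _ (mem_II (l :: u) i j hij _))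

theorem f_II (k : Fin 2) (y : Fsp) (hy : y ∈ II) : fo k y ∈ II := by
  refine map_II _ (fun u i j y hij => ?_) y hy
  induction u with
  | nil =>
    rw [Ew, So_f i j k hij]
    exact mem_II [] i j hij _
  | cons l u ih =>
    rw [Ew, comm_apply, rel_op.symm.ef]
    refine Submodule.add_mem _ (e_II _ _ ih) ?_
    split_ifs
    · exact Submodule.neg_mem _ (h_II _ _ (mem_II u i j hij _))
    · exact Submodule.zero_mem _

open KacMoody

/-- The representation of the free Lie algebra. -/
noncomputable def rho : FreeLie 2 →ₗ⁅ℂ⁆ Module.End ℂ Fsp :=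
  FreeLieAlgebra.lift ℂ (fun g => match g with
    | ChevalleyGen.e i => eo i
    | ChevalleyGen.f i => fo i
    | ChevalleyGen.h i => ho i)

theorem rho_E (i : Fin 2) : rho (E i) = eo i := by simp [rho, E]
theorem rho_F (i : Fin 2) : rho (F i) = fo i := by simp [rho, F]
theorem rho_H (i : Fin 2) : rho (H i) = ho i := by simp [rho, H]

theorem rho_II (x : FreeLie 2) (y : Fsp) (hy : y ∈ II) : rho x y ∈ II := by
  let K : LieSubalgebra ℂ (FreeLie 2) :=
    { carrier := {x | ∀ y ∈ II, rho x y ∈ II}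
      zero_mem' := by intro z hz; rw [map_zero]; exact Submodule.zero_mem _
      add_mem' := by
        intro a b ha hb z hz
        rw [map_add]
        exact Submodule.add_mem _ (ha z hz) (hb z hz)
      smul_mem' := by
        intro c a ha z hz
        rw [map_smul]
        exact Submodule.smul_mem _ _ (ha z hz)
      lie_mem' := by
        intro a b ha hb z hz
        rw [LieHom.map_lie]
        exact Submodule.sub_mem _ (ha _ (hb z hz)) (hb _ (ha z hz)) }
  refine free_induct K (fun i => ?_) (fun i => ?_) (fun i => ?_) x y hy
  · intro y hy; rw [rho_E]; exact e_II i y hy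
  · intro y hy; rw [rho_F]; exact f_II i y hy
  · intro y hy; rw [rho_H]; exact h_II i y hy

theorem rho_serre (x : FreeLie 2) (hx : x ∈ serreIdeal A3) (y : Fsp) : rho x y ∈ II := by
  let J : LieIdeal ℂ (FreeLie 2) :=
    { carrier := {x | ∀ y, rho x y ∈ II}
      zero_mem' := by intro z; rw [map_zero]; exact Submodule.zero_mem _
      add_mem' := by
        intro a b ha hb z
        rw [map_add]
        exact Submodule.add_mem _ (ha z) (hb z)
      smul_mem' := by
        intro c a ha z
        rw [map_smul]
        exact Submodule.smul_mem _ _ (ha z)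
      lie_mem := by
        intro a b hb z
        rw [LieHom.map_lie]
        exact Submodule.sub_mem _ (rho_II a _ (hb z)) (hb _) }
  have hJ : serreIdeal A3 ≤ J := by
    refine LieSubmodule.lieSpan_le.mpr ?_
    have z : ∀ x, rho x = 0 → x ∈ (J : Set (FreeLie 2)) := by
      intro x hx y
      rw [hx]; exact Submodule.zero_mem _
    have h4 : ∀ i j : Fin 2, i ≠ j → (1 - A3 i j).toNat = 4 := by decide
    rintro x (((((⟨i, j, rfl⟩ | ⟨i, j, rfl⟩) | ⟨i, j, rfl⟩) | ⟨i, j, rfl⟩) | ⟨i, j, hij, rfl⟩) |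
      ⟨i, j, hij, rfl⟩)
    · refine z _ ?_
      rw [LieHom.map_lie, rho_H, rho_H, rel_op.hh]
    · refine z _ ?_
      rw [map_sub, LieHom.map_lie, rho_E, rho_F, rel_op.ef]
      split_ifs
      · rw [rho_H, sub_self]
      · rw [map_zero, sub_self]
    · refine z _ ?_
      rw [map_sub, LieHom.map_lie, map_smul, rho_H, rho_E, rel_op.he, sub_self]
    · refine z _ ?_
      rw [map_add, LieHom.map_lie, map_smul, rho_H, rho_F, rel_op.hf, neg_add_cancel]
    · intro y
      rw [h4 i j hij]
      simp only [pow_succ, pow_zero, one_mul, Module.End.mul_apply, LieAlgebra.ad_apply,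
        LieHom.map_lie, rho_E]
      exact mem_II [] i j hij y
    · refine z _ ?_
      rw [h4 i j hij]
      simp only [pow_succ, pow_zero, one_mul, Module.End.mul_apply, LieAlgebra.ad_apply,
        LieHom.map_lie, rho_F]
      exact To_zero i j hij
  exact hJ hx y

/-- Words without a factor of length five with content `(4,1)` or `(1,4)`. -/
def good : List (Fin 2) → Bool
  | a :: b :: c :: d :: g :: w =>
    (![false, true, false, false, true, false] (Fin.ofNat 6 (a.val + b.val + c.val + d.val + g.val)) == false)
      && good (b :: c :: d :: g :: w)
  | _ => true

theorem good_tail (a : Fin 2) (w : List (Fin 2)) (h : good (a :: w) = true) : good w = true := by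
  match w, h with
  | [], _ => rfl
  | [_], _ => rfl
  | [_, _], _ => rfl
  | [_, _, _], _ => rfl
  | b :: c :: d :: g :: w, h =>
    rw [good, Bool.and_eq_true] at h
    exact h.2

theorem eo_nil (i : Fin 2) (z : Fsp) : (eo i z) [] = 0 := by
  have : Finsupp.lapply [] ∘ₗ eo i = (0 : Fsp →ₗ[ℂ] ℂ) := by
    refine end_ext _ _ fun w => ?_
    rw [LinearMap.comp_apply, eo_vw]
    simp [vw]
  exact LinearMap.congr_fun this z

theorem eo_cons (i k : Fin 2) (w : List (Fin 2)) (z : Fsp) :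
    (eo i z) (k :: w) = if i = k then z w else 0 := by
  have : Finsupp.lapply (k :: w) ∘ₗ eo i =
      ((if i = k then 1 else 0 : ℂ) • Finsupp.lapply w : Fsp →ₗ[ℂ] ℂ) := by
    refine end_ext _ _ fun v => ?_
    rw [LinearMap.comp_apply, eo_vw]
    simp [vw, Finsupp.single_apply]
    split_ifs <;> simp_all
  have := LinearMap.congr_fun this z
  refine this.trans ?_
  split_ifs <;> simp

theorem So_good (i j : Fin 2) (hij : i ≠ j) (y : Fsp) (w : List (Fin 2)) (hw : good w = true) :
    (So i j y) w = 0 := by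
  simp only [So, rn, LieRing.of_associative_ring_bracket, LinearMap.sub_apply, Module.End.mul_apply,
    mul_sub, sub_mul, map_sub, Finsupp.sub_apply]
  match w, hw with
  | [], _ => simp only [eo_nil, eo_cons]; simp
  | [_], _ => simp only [eo_nil, eo_cons]; simp
  | [_, _], _ => simp only [eo_nil, eo_cons]; simp
  | [_, _, _], _ => simp only [eo_nil, eo_cons]; simp
  | [_, _, _, _], _ => simp only [eo_nil, eo_cons]; simp
  | a :: b :: c :: d :: g :: w, h =>
    rw [good, Bool.and_eq_true] at h
    have h := h.1
    clear * - h hij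
    simp only [eo_cons]
    generalize y w = t
    have hj : j = 1 - i := by
      clear h
      revert i j; decide
    subst hj
    fin_cases i <;> fin_cases a <;> fin_cases b <;> fin_cases c <;> fin_cases d <;> fin_cases g <;>
      first
        | (exfalso; revert h; decide)
        | simp

theorem Ew_good (u : List (Fin 2)) (i j : Fin 2) (hij : i ≠ j) (y : Fsp) (w : List (Fin 2))
    (hw : good w = true) : (Ew u (So i j y)) w = 0 := by
  induction u generalizing w with
  | nil => exact So_good i j hij y w hw
  | cons k u ih =>
    cases w with
    | nil => rw [Ew, eo_nil]
    | cons a w =>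
      rw [Ew, eo_cons, ih w (good_tail a w hw)]
      simp

theorem II_good (y : Fsp) (hy : y ∈ II) (w : List (Fin 2)) (hw : good w = true) : y w = 0 := by
  have : II ≤ LinearMap.ker (Finsupp.lapply w : Fsp →ₗ[ℂ] ℂ) := by
    refine Submodule.span_le.mpr ?_
    rintro x ⟨u, i, j, y, hij, rfl⟩
    exact Ew_good u i j hij y w hw
  exact this hy

/-- Evaluate a functional, given by its values on words, on a right-normed bracket. -/
def ev {R : Type*} [Ring R] (c : List (Fin 2) → R) : List (Fin 2) → R
  | [] => 0
  | [i] => c [i]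
  | i :: j :: w => ev (fun u => c (i :: u)) (j :: w) - ev (fun u => c (u ++ [i])) (j :: w)

theorem ev_cast (c : List (Fin 2) → ℤ) (w : List (Fin 2)) :
    ((ev c w : ℤ) : ℂ) = ev (fun u => (c u : ℂ)) w := by
  induction w generalizing c with
  | nil => simp [ev]
  | cons i w ih =>
    cases w with
    | nil => simp [ev]
    | cons j w => simp [ev, ih]

theorem rn_ev (φ : Fsp →ₗ[ℂ] ℂ) (v w : List (Fin 2)) :
    φ (rn eo w (vw v)) = ev (fun u => φ (vw (u ++ v))) w := by
  induction w generalizing φ v with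
  | nil => simp [rn, ev]
  | cons i w ih =>
    cases w with
    | nil => simp [rn, ev, eo_vw]
    | cons j w =>
      rw [rn, ev, LieRing.of_associative_ring_bracket, LinearMap.sub_apply, Module.End.mul_apply,
        Module.End.mul_apply, map_sub, eo_vw, ih]
      have := ih (φ ∘ₗ eo i) v
      simp only [LinearMap.comp_apply, eo_vw] at this
      rw [this]
      simp

theorem rho_rn (w : List (Fin 2)) : rho (rn E w) = rn eo w := by
  induction w with
  | nil => simp [rn]
  | cons i w ih =>
    cases w with
    | nil => exact rho_E i
    | cons j w => rw [rn, rn, LieHom.map_lie, rho_E, ih]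

theorem pr_rn (w : List (Fin 2)) : pr (rn E w) = rn eb w := by
  induction w with
  | nil => simp [rn]
  | cons i w ih =>
    cases w with
    | nil => rfl
    | cons j w => rw [rn, rn, LieHom.map_lie, ih]; rfl

theorem rn_coeff (w t : List (Fin 2)) :
    (rho (rn E w) (vw [])) t = ((ev (fun u => if u = t then 1 else 0) w : ℤ) : ℂ) := by
  have := rn_ev (Finsupp.lapply t) [] w
  rw [rho_rn, ev_cast]
  refine this.trans ?_
  congr 1
  funext u
  simp [vw, Finsupp.single_apply]

end Rep

section Final

open KacMoody

/-- The nine basis words. -/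
def W9 : Fin 9 → List (Fin 2) :=
  ![[0, 0, 1, 1, 0, 1, 1, 0, 1],
    [0, 1, 0, 1, 0, 1, 1, 0, 1],
    [0, 1, 1, 0, 0, 1, 1, 0, 1],
    [0, 1, 1, 0, 1, 0, 1, 0, 1],
    [1, 0, 0, 1, 0, 1, 1, 0, 1],
    [1, 0, 1, 0, 0, 1, 1, 0, 1],
    [1, 0, 1, 0, 1, 0, 1, 0, 1],
    [1, 0, 1, 1, 0, 0, 1, 0, 1],
    [1, 1, 0, 0, 0, 1, 1, 0, 1]]

/-- The nine good words used as functionals. -/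
def T9 : Fin 9 → List (Fin 2) :=
  ![[0, 0, 1, 1, 0, 0, 1, 1, 1],
    [0, 0, 1, 1, 0, 1, 0, 1, 1],
    [0, 0, 1, 1, 1, 0, 0, 1, 1],
    [0, 1, 0, 1, 0, 0, 1, 1, 1],
    [0, 1, 0, 1, 0, 1, 0, 1, 1],
    [0, 1, 0, 1, 0, 1, 1, 0, 1],
    [0, 1, 0, 1, 1, 0, 0, 1, 1],
    [0, 1, 1, 0, 0, 0, 1, 1, 1],
    [0, 1, 1, 1, 0, 0, 0, 1, 1]]

/-- Pairing matrix. -/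
def M9 : Fin 9 → Fin 9 → ℤ :=
  ![![1, -6, 1, 0, 0, 0, 0, 0, 0],
    ![0, -3, 1, 1, -3, -3, 0, 0, 0],
    ![0, -6, 3, 0, 0, -12, -3, 1, -1],
    ![-1, -2, 1, 2, -12, -4, 2, 1, -1],
    ![0, -3, 1, 0, 0, -6, 0, 0, 0],
    ![0, -6, 3, 0, 0, -6, -3, 0, -1],
    ![-1, -2, 1, 1, -8, -6, 1, 0, -1],
    ![-1, 0, 0, -2, -8, -4, 2, 2, -2],
    ![0, -9, 6, 0, 0, 0, -9, 0, -4]]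

/-- Adjugate of the pairing matrix, up to scalar. -/
def N9 : Fin 9 → Fin 9 → ℤ :=
  ![![-648, 2592, -360, -540, 1548, -1452, -612, 450, 516],
    ![-180, 648, -102, -126, 408, -352, -168, 114, 130],
    ![-378, 1296, -252, -216, 900, -660, -396, 234, 264],
    ![108, -432, 72, 108, -180, 150, 90, -90, -60],
    ![63, -270, 33, 63, -105, 116, 48, -48, -41],
    ![27, -108, 9, 27, -63, 66, 18, -18, -21],
    ![-72, 216, -66, -18, 264, -160, -96, 42, 64],
    ![162, -648, 108, 162, -378, 342, 108, -108, -126],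
    ![0, 0, 0, 0, -162, 162, 0, 0, -54]]

set_option maxRecDepth 100000 in
theorem M9_eq : ∀ k t, ev (fun u => if u = T9 t then 1 else 0) (W9 k) = M9 k t := by
  decide +kernel

theorem MN9 : ∀ k l, (∑ t, M9 k t * N9 t l) = if k = l then 54 else 0 := by
  decide +kernel

theorem T9_good : ∀ t, good (T9 t) = true := by decide

theorem li9 : LinearIndependent ℂ (fun k => rn eb (W9 k)) := by
  rw [Fintype.linearIndependent_iff]
  intro a ha
  have h0 : pr (∑ k, a k • rn E (W9 k)) = 0 := by
    rw [map_sum, ← ha]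
    refine Finset.sum_congr rfl fun k _ => ?_
    rw [map_smul, pr_rn]
  have h1 := rho_serre _ ((LieSubmodule.Quotient.mk_eq_zero').mp h0) (vw [])
  have h2 : ∀ t, ∑ k, a k * (M9 k t : ℂ) = 0 := by
    intro t
    have h := II_good _ h1 (T9 t) (T9_good t)
    rw [map_sum, LinearMap.sum_apply, Finsupp.finsetSum_apply] at h
    rw [← h]
    refine Finset.sum_congr rfl fun k _ => ?_
    rw [map_smul, LinearMap.smul_apply, Finsupp.smul_apply, rn_coeff, M9_eq, smul_eq_mul]
  intro l
  have h3 : ∑ t, (∑ k, a k * (M9 k t : ℂ)) * (N9 t l : ℂ) = a l * 54 := by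
    simp only [Finset.sum_mul]
    rw [Finset.sum_comm]
    have : ∀ k, ∑ t, a k * (M9 k t : ℂ) * (N9 t l : ℂ) = if k = l then a k * 54 else 0 := by
      intro k
      have hk := congrArg (fun z : ℤ => (z : ℂ)) (MN9 k l)
      push_cast at hk
      simp only [mul_assoc, ← Finset.mul_sum]
      rw [hk]
      split_ifs <;> simp
    rw [Finset.sum_congr rfl fun k _ => this k]
    simp
  simp only [h2, zero_mul, Finset.sum_const_zero] at h3
  simpa using h3.symm

theorem W9_count : ∀ k, (W9 k).count 0 = 4 ∧ (W9 k).count 1 = 5 := by decide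

theorem root_eq : rootSpace A3 ![4, 5] = Submodule.span ℂ (Set.range fun k => rn eb (W9 k)) := by
  have key : ∀ x, x ∈ rootSpace A3 ![4, 5] ↔ ⁅hb 0, x⁆ = (-7 : ℂ) • x ∧ ⁅hb 1, x⁆ = (-2 : ℂ) • x := by
    intro x
    have e0 : ((∑ j, A3 0 j * (![4, 5] : Fin 2 → ℤ) j : ℤ) : ℂ) = -7 := by
      simp [Fin.sum_univ_two]
    have e1 : ((∑ j, A3 1 j * (![4, 5] : Fin 2 → ℤ) j : ℤ) : ℂ) = -2 := by
      simp [Fin.sum_univ_two]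
    rw [rootSpace, Submodule.mem_iInf, Fin.forall_fin_two, Module.End.mem_eigenspace_iff,
      Module.End.mem_eigenspace_iff, e0, e1]
    rfl
  refine le_antisymm ?_ ?_
  · intro x hx
    have hx := (key x).mp hx
    refine Submodule.span_le.mpr ?_ (weight_mem rel_gA TT_top x hx.1 hx.2)
    rintro _ ⟨w, ⟨hw0, hw1⟩, rfl⟩
    refine Submodule.span_mono ?_ (upper eb serre_hx serre_hy w hw0 hw1)
    rintro _ ⟨w, hw, rfl⟩
    have : ∃ k, W9 k = w := by
      rcases hw with rfl | rfl | rfl | rfl | rfl | rfl | rfl | rfl | rfl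
      · exact ⟨0, rfl⟩
      · exact ⟨1, rfl⟩
      · exact ⟨2, rfl⟩
      · exact ⟨3, rfl⟩
      · exact ⟨4, rfl⟩
      · exact ⟨5, rfl⟩
      · exact ⟨6, rfl⟩
      · exact ⟨7, rfl⟩
      · exact ⟨8, rfl⟩
    obtain ⟨k, rfl⟩ := this
    exact ⟨k, rfl⟩
  · refine Submodule.span_le.mpr ?_
    rintro _ ⟨k, rfl⟩
    refine (key _).mpr ?_
    obtain ⟨c0, c1⟩ := W9_count k
    constructor
    · refine (lie_rn eb (hb 0) (fun j => (A3 0 j : ℂ)) (rel_gA.he 0) (W9 k)).trans ?_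
      rw [c0, c1]
      congr 1
      simp; norm_num
    · refine (lie_rn eb (hb 1) (fun j => (A3 1 j : ℂ)) (rel_gA.he 1) (W9 k)).trans ?_
      rw [c0, c1]
      congr 1
      simp; norm_num

end Final

/-- **(Berman–Moody example.)**  For the Serre-presented Lie algebra `g(A)` of the
generalized Cartan matrix `A = [[2,−3],[−3,2]]`, the root space of `α = 4α₁ + 5α₂`
(the simultaneous eigenspace with `⁅h₁,x⁆ = −7·x`, `⁅h₂,x⁆ = −2·x`, since
`−7 = 2·4 − 3·5` and `−2 = −3·4 + 2·5`) has dimension `9`: `mult(4α₁+5α₂) = 9`. -/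
theorem mult_four_five_eq_nine :
    KacMoody.mult !![2, -3; -3, 2] ![4, 5] = 9 := by
  change Module.finrank ℂ (KacMoody.rootSpace A3 ![4, 5]) = 9
  rw [root_eq, finrank_span_eq_card li9]
  rfl
end
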